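/- arXiv:2503.20675 — 6 statements merged into one kernel-verified Lean document; each statement's English description precedes it below -/
import Mathlib

section
/- Let V be a finite set; for each j ∈ V let n_j, m_j be positive integers, and let N⁺ assign to each j ∈ V a set N_j⁺ ⊆ V \ {j}; for each j ∈ V and k ∈ N_j⁺ let r_{jk} be a positive integer. Suppose given real matrices J_j ∈ ℝ^{m_j×m_j} antisymmetric, M_j ∈ ℝ^{m_j×n_j}, and for each j ∈ V, k ∈ N_j⁺, matrices D_{jk} ∈ ℝ^{r_{jk}×m_j} and N_{kj} ∈ ℝ^{r_{jk}×n_k}, such that D_{jk} J_j D_{jℓ}ᵀ = 0 for all distinct k, ℓ ∈ N_j⁺. Define the block matrix M = (M_{jk})_{j,k∈V} by M_{jj} = M_j, M_{jk} = D_{jk}ᵀ N_{kj} if k ∈ N_j⁺, and M_{jk} = 0 otherwise; let J := blockdiag_{j∈V}(J_j), let N_j⁻ := {k ∈ V : j ∈ N_k⁺}, and define the block matrix Γ = (γ_{jk})_{j,k∈V} by γ_{jj} = Σ_{ℓ ∈ {j} ∪ N_j⁻} M_{ℓj}ᵀ J_ℓ M_{ℓj}, γ_{jk} = 2 M_{kj}ᵀ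 J_k M_k if k ∈ N_j⁻ (j ≠ k), and γ_{jk} = 0 otherwise. Then the antisymmetric part of Γ equals MᵀJM, that is, (Γ − Γᵀ)/2 = MᵀJM. -/
open Matrix

/-- For a network of OQHOs on a finite vertex set `V` with field-mediated coupling
described by neighbourhoods `N⁺`, selection matrices `D`, coupling matrices `Mb`, `NN`
and antisymmetric Ito matrices `Jb`, the antisymmetric part of the block matrix `Γ`
(built from the blocks of the network-field coupling matrix `M`) equals `Mᵀ J M`:
`(Γ - Γᵀ)/2 = Mᵀ J M`. -/
theorem stmt_0 (V : Type) [Fintype V] [DecidableEq V]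
    (n m : V → ℕ) (hn : ∀ j, 0 < n j) (hm : ∀ j, 0 < m j)
    (Nplus : V → Finset V) (hNplus : ∀ j, j ∉ Nplus j)
    (r : V → V → ℕ) (hr : ∀ j k, k ∈ Nplus j → 0 < r j k)
    -- data of the component oscillators
    (Jb : ∀ j, Matrix (Fin (m j)) (Fin (m j)) ℝ)
    (hJb : ∀ j, (Jb j)ᵀ = -(Jb j))
    (Mb : ∀ j, Matrix (Fin (m j)) (Fin (n j)) ℝ)
    (D : ∀ j k, Matrix (Fin (r j k)) (Fin (m j)) ℝ)
    (NN : ∀ j k, Matrix (Fin (r j k)) (Fin (n k)) ℝ)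
    (hD : ∀ j, ∀ k ∈ Nplus j, ∀ l ∈ Nplus j, k ≠ l → D j k * Jb j * (D j l)ᵀ = 0)
    -- the block matrix `M = (M_{jk})` of network-field coupling
    (M : Matrix ((j : V) × Fin (m j)) ((j : V) × Fin (n j)) ℝ)
    (hMdiag : ∀ j (a : Fin (m j)) (b : Fin (n j)), M ⟨j, a⟩ ⟨j, b⟩ = Mb j a b)
    (hMplus : ∀ j k (h : k ∈ Nplus j), ∀ (a : Fin (m j)) (b : Fin (n k)),
      M ⟨j, a⟩ ⟨k, b⟩ = ((D j k)ᵀ * NN j k) a b)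
    (hMzero : ∀ j k, j ≠ k → k ∉ Nplus j → ∀ (a : Fin (m j)) (b : Fin (n k)),
      M ⟨j, a⟩ ⟨k, b⟩ = 0)
    -- the block-diagonal matrix `J`
    (J : Matrix ((j : V) × Fin (m j)) ((j : V) × Fin (m j)) ℝ)
    (hJdiag : ∀ j (a b : Fin (m j)), J ⟨j, a⟩ ⟨j, b⟩ = Jb j a b)
    (hJoff : ∀ j k, j ≠ k → ∀ (a : Fin (m j)) (b : Fin (m k)), J ⟨j, a⟩ ⟨k, b⟩ = 0)
    -- the blocks `M_{jk}` of `M` as rectangular matrices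
    (Mblk : ∀ j k, Matrix (Fin (m j)) (Fin (n k)) ℝ)
    (hMblk : ∀ j k (a : Fin (m j)) (b : Fin (n k)), Mblk j k a b = M ⟨j, a⟩ ⟨k, b⟩)
    -- the block matrix `Γ = (γ_{jk})`
    (Γ : Matrix ((j : V) × Fin (n j)) ((j : V) × Fin (n j)) ℝ)
    (hΓdiag : ∀ j (a b : Fin (n j)), Γ ⟨j, a⟩ ⟨j, b⟩ =
      (∑ l ∈ insert j (Finset.univ.filter fun k => j ∈ Nplus k),
        (Mblk l j)ᵀ * Jb l * Mblk l j) a b)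
    (hΓminus : ∀ j k, j ≠ k → j ∈ Nplus k → ∀ (a : Fin (n j)) (b : Fin (n k)),
      Γ ⟨j, a⟩ ⟨k, b⟩ = ((2 : ℝ) • ((Mblk k j)ᵀ * Jb k * Mb k)) a b)
    (hΓzero : ∀ j k, j ≠ k → j ∉ Nplus k → ∀ (a : Fin (n j)) (b : Fin (n k)),
      Γ ⟨j, a⟩ ⟨k, b⟩ = 0) :
    (1 / 2 : ℝ) • (Γ - Γᵀ) = Mᵀ * J * M := by
  have hB0 : ∀ l k, l ≠ k → k ∉ Nplus l → Mblk l k = 0 := by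
    intro l k h1 h2
    ext a b
    rw [hMblk, hMzero l k h1 h2]
    rfl
  have hBd : ∀ l, Mblk l l = Mb l := by
    intro l
    ext a b
    rw [hMblk, hMdiag]
  have hBp : ∀ l k, k ∈ Nplus l → Mblk l k = (D l k)ᵀ * NN l k := by
    intro l k h
    ext a b
    rw [hMblk, hMplus l k h]
  have hT : ∀ l j k (a : Fin (n j)) (b : Fin (n k)),
      ((Mblk l k)ᵀ * Jb l * Mblk l j) b a = - ((Mblk l j)ᵀ * Jb l * Mblk l k) a b := by
    intro l j k a b
    have h : ((Mblk l k)ᵀ * Jb l * Mblk l j) = -((Mblk l j)ᵀ * Jb l * Mblk l k)ᵀ := by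
      simp [Matrix.transpose_mul, hJb, Matrix.mul_assoc]
    rw [h]
    rfl
  have hR : ∀ j k (a : Fin (n j)) (b : Fin (n k)), (Mᵀ * J * M) ⟨j, a⟩ ⟨k, b⟩ =
      ∑ l, ((Mblk l j)ᵀ * Jb l * Mblk l k) a b := by
    intro j k a b
    rw [Matrix.mul_apply, Fintype.sum_sigma]
    refine Finset.sum_congr rfl fun l _ => ?_
    rw [Matrix.mul_apply]
    refine Finset.sum_congr rfl fun c _ => ?_
    rw [Matrix.mul_apply, Matrix.mul_apply, Fintype.sum_sigma, hMblk]
    congr 1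
    rw [Finset.sum_eq_single l]
    · refine Finset.sum_congr rfl fun d _ => ?_
      rw [hJdiag, Matrix.transpose_apply, Matrix.transpose_apply, hMblk]
    · intro l' _ hl
      refine Finset.sum_eq_zero fun d _ => ?_
      rw [hJoff l' l hl, mul_zero]
    · simp
  ext ⟨j, a⟩ ⟨k, b⟩
  rw [hR]
  simp only [Matrix.smul_apply, Matrix.sub_apply, Matrix.transpose_apply, smul_eq_mul]
  by_cases hjk : j = k
  · subst hjk
    rw [hΓdiag, hΓdiag, Matrix.sum_apply, Matrix.sum_apply,
      Finset.sum_congr rfl (fun l _ => hT l j j a b), Finset.sum_neg_distrib]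
    have : ∑ l ∈ insert j (Finset.univ.filter fun k => j ∈ Nplus k),
        ((Mblk l j)ᵀ * Jb l * Mblk l j) a b = ∑ l, ((Mblk l j)ᵀ * Jb l * Mblk l j) a b := by
      refine Finset.sum_subset (Finset.subset_univ _) fun l _ hl => ?_
      simp only [Finset.mem_insert, Finset.mem_filter, Finset.mem_univ, true_and, not_or] at hl
      rw [hB0 l j hl.1 hl.2]
      simp
    rw [this]
    ring
  · have hG : ∀ j k, j ≠ k → ∀ (a : Fin (n j)) (b : Fin (n k)),
        Γ ⟨j, a⟩ ⟨k, b⟩ = 2 * ((Mblk k j)ᵀ * Jb k * Mblk k k) a b := by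
      intro j k h a b
      by_cases hk : j ∈ Nplus k
      · rw [hΓminus j k h hk, hBd]
        rfl
      · rw [hΓzero j k h hk, hB0 k j (Ne.symm h) hk]
        simp
    rw [hG j k hjk, hG k j (Ne.symm hjk), hT j j k a b]
    have : ∑ l, ((Mblk l j)ᵀ * Jb l * Mblk l k) a b =
        ∑ l ∈ ({j, k} : Finset V), ((Mblk l j)ᵀ * Jb l * Mblk l k) a b := by
      symm
      refine Finset.sum_subset (Finset.subset_univ _) fun l _ hl => ?_
      simp only [Finset.mem_insert, Finset.mem_singleton, not_or] at hl
      by_cases h1 : j ∈ Nplus l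
      · by_cases h2 : k ∈ Nplus l
        · have h3 : (Mblk l j)ᵀ * Jb l * Mblk l k
              = (NN l j)ᵀ * (D l j * Jb l * (D l k)ᵀ) * NN l k := by
            rw [hBp l j h1, hBp l k h2]
            simp [Matrix.transpose_mul, Matrix.mul_assoc]
          rw [h3, hD l j h1 k h2 hjk]
          simp
        · rw [hB0 l k hl.2 h2]
          simp
      · rw [hB0 l j hl.1 h1]
        simp
    rw [this, Finset.sum_pair hjk]
    ring
end

section
/- Let Θ ∈ ℝ^{n×n} and J ∈ ℝ^{m×m} be antisymmetric, let R ∈ ℝ^{n×n} be symmetric, and let M ∈ ℝ^{m×n}. Define A := 2Θ(R + MᵀJM) and B := 2ΘMᵀ. Then the physical realizability identity AΘ + ΘAᵀ + BJBᵀ = 0 holds. -/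
open Matrix

/-- Physical realizability identity `AΘ + ΘAᵀ + BJBᵀ = 0` for
`A = 2Θ(R + MᵀJM)`, `B = 2ΘMᵀ`, with `Θ`, `J` antisymmetric and `R` symmetric. -/
theorem stmt_2 (n m : ℕ) (Θ : Matrix (Fin n) (Fin n) ℝ)
    (J : Matrix (Fin m) (Fin m) ℝ) (R : Matrix (Fin n) (Fin n) ℝ)
    (M : Matrix (Fin m) (Fin n) ℝ)
    (hΘ : Θᵀ = -Θ) (hJ : Jᵀ = -J) (hR : Rᵀ = R)
    (A : Matrix (Fin n) (Fin n) ℝ) (hA : A = (2 : ℝ) • (Θ * (R + Mᵀ * J * M)))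
    (B : Matrix (Fin n) (Fin m) ℝ) (hB : B = (2 : ℝ) • (Θ * Mᵀ)) :
    A * Θ + Θ * Aᵀ + B * J * Bᵀ = 0 := by
  subst hA hB
  simp only [transpose_smul, transpose_mul, transpose_add, transpose_transpose, hΘ, hJ, hR,
    Matrix.mul_add, Matrix.add_mul, Matrix.mul_neg, Matrix.neg_mul, Matrix.mul_smul,
    Matrix.smul_mul, Matrix.mul_assoc, smul_add, smul_neg, smul_smul]
  module
end

section
/- Let Θ ∈ ℝ^{n×n} and J ∈ ℝ^{m×m} be real antisymmetric, M ∈ ℝ^{m×n}, B := 2ΘMᵀ, let P, Σ ∈ ℝ^{n×n} be symmetric, and for a symmetric matrix R ∈ ℝ^{n×n} set A(R) := 2Θ(R + MᵀJM) and f(R) := ⟨Σ, A(R)BBᵀ + BBᵀA(R)ᵀ + 2A(R)PA(R)ᵀ⟩. Then for all symmetric R, δ ∈ ℝ^{n×n}, the directional derivative of f at R along δ is d/dt f(R + tδ)|_{t=0} = ⟨−4S(ΘΣ(BBᵀ + 2A(R)P)), δ⟩, where S(X) := (X + Xᵀ)/2. -/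
open Matrix

/-- Directional derivative of `f(R) = ⟨Σ, A(R)BBᵀ + BBᵀA(R)ᵀ + 2A(R)PA(R)ᵀ⟩` at a
symmetric `R` along a symmetric `δ`: it equals `⟨−4S(ΘΣ(BBᵀ + 2A(R)P)), δ⟩`. -/
theorem stmt_14 (n m : ℕ)
    (Θ : Matrix (Fin n) (Fin n) ℝ) (hΘ : Θᵀ = -Θ)
    (J : Matrix (Fin m) (Fin m) ℝ) (hJ : Jᵀ = -J)
    (M : Matrix (Fin m) (Fin n) ℝ)
    (B : Matrix (Fin n) (Fin m) ℝ) (hB : B = (2 : ℝ) • (Θ * Mᵀ))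
    (P Sig : Matrix (Fin n) (Fin n) ℝ) (hP : Pᵀ = P) (hSig : Sigᵀ = Sig)
    (A : Matrix (Fin n) (Fin n) ℝ → Matrix (Fin n) (Fin n) ℝ)
    (hA : ∀ R, A R = (2 : ℝ) • (Θ * (R + Mᵀ * J * M)))
    (f : Matrix (Fin n) (Fin n) ℝ → ℝ)
    (hf : ∀ R, f R = (Sigᵀ *
      (A R * B * Bᵀ + B * Bᵀ * (A R)ᵀ + (2 : ℝ) • (A R * P * (A R)ᵀ))).trace) :
    ∀ R δ : Matrix (Fin n) (Fin n) ℝ, Rᵀ = R → δᵀ = δ →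
      HasDerivAt (fun t : ℝ => f (R + t • δ))
        ((((-4 : ℝ) • ((1 / 2 : ℝ) •
          (Θ * Sig * (B * Bᵀ + (2 : ℝ) • (A R * P)) +
            (Θ * Sig * (B * Bᵀ + (2 : ℝ) • (A R * P)))ᵀ)))ᵀ * δ).trace) 0 := by
  intro R δ hR hδ
  have hAt : ∀ t : ℝ, A (R + t • δ) = A R + t • ((2 : ℝ) • (Θ * δ)) := by
    intro t
    rw [hA, hA]
    simp only [Matrix.mul_add, Matrix.mul_smul, smul_add]
    rw [smul_comm t (2 : ℝ)]
    abel
  generalize A R = X at hAt ⊢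
  have hK : (B * Bᵀ)ᵀ = B * Bᵀ := by simp
  have hf' : ∀ t : ℝ, f (R + t • δ) =
      (Sig * (X * (B * Bᵀ) + (B * Bᵀ) * Xᵀ + (2 : ℝ) • (X * P * Xᵀ))).trace
      + t * (-4 * (Θ * Sig * (B * Bᵀ) * δ).trace - 8 * (Θ * Sig * (X * P) * δ).trace)
      + t ^ 2 * (-8 * (Sig * (Θ * δ * P * (δ * Θ))).trace) := by
    intro t
    rw [hf, hAt, hSig, Matrix.mul_assoc _ B]
    generalize B * Bᵀ = K at hK ⊢
    have e2 : (Sig * (K * (δ * Θ))).trace = (Θ * (Sig * (K * δ))).trace := by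
      rw [Matrix.trace_mul_comm Θ]
      simp only [Matrix.mul_assoc]
    have e1 : (Sig * (Θ * (δ * K))).trace = -(Θ * (Sig * (K * δ))).trace := by
      rw [← e2, ← Matrix.trace_transpose]
      simp only [Matrix.transpose_mul, hΘ, hδ, hSig, hK]
      rw [Matrix.trace_mul_comm]
      simp [Matrix.mul_assoc]
    have e3 : (Sig * (X * (P * (δ * Θ)))).trace = (Θ * (Sig * (X * (P * δ)))).trace := by
      rw [Matrix.trace_mul_comm Θ]
      simp only [Matrix.mul_assoc]
    have e4 : (Sig * (Θ * (δ * (P * Xᵀ)))).trace = -(Θ * (Sig * (X * (P * δ)))).trace := by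
      rw [← e3, ← Matrix.trace_transpose]
      simp only [Matrix.transpose_mul, hΘ, hδ, hSig, hP, Matrix.transpose_transpose]
      rw [Matrix.trace_mul_comm]
      simp [Matrix.mul_assoc]
    simp only [Matrix.transpose_add, Matrix.transpose_smul, Matrix.transpose_mul, hΘ, hδ,
      Matrix.mul_add, Matrix.add_mul, Matrix.mul_smul, Matrix.smul_mul, Matrix.trace_add,
      Matrix.trace_smul, Matrix.mul_neg, Matrix.trace_neg, smul_eq_mul, Matrix.mul_assoc,
      e1, e2, e3, e4, smul_add, smul_neg]
    ring
  have hv : (((-4 : ℝ) • ((1 / 2 : ℝ) •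
          (Θ * Sig * (B * Bᵀ + (2 : ℝ) • (X * P)) +
            (Θ * Sig * (B * Bᵀ + (2 : ℝ) • (X * P)))ᵀ)))ᵀ * δ).trace
      = -4 * (Θ * Sig * (B * Bᵀ) * δ).trace - 8 * (Θ * Sig * (X * P) * δ).trace := by
    have e : ∀ Y : Matrix (Fin n) (Fin n) ℝ, (Yᵀ * δ).trace = (Y * δ).trace := by
      intro Y
      rw [← Matrix.trace_transpose, Matrix.transpose_mul, hδ, Matrix.transpose_transpose,
        Matrix.trace_mul_comm]
    rw [e]
    simp only [Matrix.smul_mul, Matrix.add_mul, Matrix.trace_smul, Matrix.trace_add, e]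
    simp only [Matrix.mul_add, Matrix.add_mul, Matrix.mul_smul, Matrix.smul_mul,
      Matrix.trace_smul, Matrix.trace_add, smul_eq_mul]
    ring
  rw [hv, funext hf']
  generalize -4 * (Θ * Sig * (B * Bᵀ) * δ).trace - 8 * (Θ * Sig * (X * P) * δ).trace = c
  have h := (((hasDerivAt_id (0 : ℝ)).mul_const c).const_add
    (Sig * (X * (B * Bᵀ) + (B * Bᵀ) * Xᵀ + (2 : ℝ) • (X * P * Xᵀ))).trace).add
    ((hasDerivAt_pow 2 (0 : ℝ)).mul_const (-8 * (Sig * (Θ * δ * P * (δ * Θ))).trace))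
  have hc : 1 * c + ((2 : ℕ) : ℝ) * (0 : ℝ) ^ (2 - 1) *
      (-8 * (Sig * (Θ * δ * P * (δ * Θ))).trace) = c := by simp
  rw [hc] at h
  exact h
end

section
/- Let Θ ∈ ℝ^{n×n} and J ∈ ℝ^{m×m} be real antisymmetric, M ∈ ℝ^{m×n}, B := 2ΘMᵀ, let P ∈ ℝ^{n×n} be real symmetric positive semidefinite with positive semidefinite square root √P, let F ∈ ℝ^{s×n}, Σ := FᵀF, and for symmetric R ∈ ℝ^{n×n} set A(R) := 2Θ(R + MᵀJM) and f(R) := ⟨Σ, A(R)BBᵀ + BBᵀA(R)ᵀ + 2A(R)PA(R)ᵀ⟩. Then for all symmetric R, δ ∈ ℝ^{n×n}, the second directional derivative satisfies d²/dt² f(R + tδ)|_{t=0} = 16‖FΘδ√P‖² ≥ 0; in particular, f is a convex function on the space of real symmetric n×n matrices. -/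
open Matrix

/-- Second directional derivative of `f(R) = ⟨Σ, A(R)BBᵀ + BBᵀA(R)ᵀ + 2A(R)PA(R)ᵀ⟩`
along a symmetric direction `δ`: it equals `16‖FΘδ√P‖² ≥ 0`; in particular `f` is
convex on the space of real symmetric matrices. -/
theorem stmt_15 (n m s : ℕ)
    (Θ : Matrix (Fin n) (Fin n) ℝ) (hΘ : Θᵀ = -Θ)
    (J : Matrix (Fin m) (Fin m) ℝ) (hJ : Jᵀ = -J)
    (M : Matrix (Fin m) (Fin n) ℝ)
    (B : Matrix (Fin n) (Fin m) ℝ) (hB : B = (2 : ℝ) • (Θ * Mᵀ))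
    (P sqrtP : Matrix (Fin n) (Fin n) ℝ)
    (hP : P.PosSemidef) (hsqrtP : sqrtP.PosSemidef) (hsq : sqrtP * sqrtP = P)
    (F : Matrix (Fin s) (Fin n) ℝ)
    (Sig : Matrix (Fin n) (Fin n) ℝ) (hSig : Sig = Fᵀ * F)
    (A : Matrix (Fin n) (Fin n) ℝ → Matrix (Fin n) (Fin n) ℝ)
    (hA : ∀ R, A R = (2 : ℝ) • (Θ * (R + Mᵀ * J * M)))
    (f : Matrix (Fin n) (Fin n) ℝ → ℝ)
    (hf : ∀ R, f R = (Sigᵀ *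
      (A R * B * Bᵀ + B * Bᵀ * (A R)ᵀ + (2 : ℝ) • (A R * P * (A R)ᵀ))).trace) :
    (∀ R δ : Matrix (Fin n) (Fin n) ℝ, Rᵀ = R → δᵀ = δ →
      HasDerivAt (deriv fun t : ℝ => f (R + t • δ))
        (16 * ((F * Θ * δ * sqrtP)ᵀ * (F * Θ * δ * sqrtP)).trace) 0 ∧
      0 ≤ 16 * ((F * Θ * δ * sqrtP)ᵀ * (F * Θ * δ * sqrtP)).trace) ∧
    ConvexOn ℝ {X : Matrix (Fin n) (Fin n) ℝ | Xᵀ = X} f := by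
  have key : ∀ R δ : Matrix (Fin n) (Fin n) ℝ, ∃ l : ℝ, ∀ t : ℝ,
      f (R + t • δ) = f R + t * l +
        t ^ 2 * (8 * ((F * Θ * δ * sqrtP)ᵀ * (F * Θ * δ * sqrtP)).trace) := by
    intro R δ
    obtain ⟨D, hD⟩ : ∃ D, D = (2 : ℝ) • (Θ * δ) := ⟨_, rfl⟩
    have hAt : ∀ t : ℝ, A (R + t • δ) = A R + t • D := by
      intro t
      rw [hA, hA, hD]
      simp only [Matrix.mul_add, Matrix.mul_smul, smul_add]
      rw [smul_comm (2 : ℝ) t]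
      abel
    have hS : sqrtPᵀ = sqrtP := by
      have h := hsqrtP.isHermitian.eq
      rwa [Matrix.conjTranspose_eq_transpose_of_trivial] at h
    have hq : (Sigᵀ * (D * P * Dᵀ)).trace =
        4 * ((F * Θ * δ * sqrtP)ᵀ * (F * Θ * δ * sqrtP)).trace := by
      rw [Matrix.trace_mul_comm (F * Θ * δ * sqrtP)ᵀ, hD, hSig, ← hsq]
      simp only [Matrix.transpose_mul, Matrix.transpose_smul, Matrix.transpose_transpose,
        Matrix.smul_mul, Matrix.mul_smul, Matrix.trace_smul, smul_eq_mul, hS]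
      rw [Matrix.mul_assoc Fᵀ F, Matrix.trace_mul_comm Fᵀ]
      simp only [Matrix.mul_assoc]
      ring
    refine ⟨(Sigᵀ * (D * B * Bᵀ)).trace + (Sigᵀ * (B * Bᵀ * Dᵀ)).trace
      + 2 * (Sigᵀ * (D * P * (A R)ᵀ)).trace + 2 * (Sigᵀ * (A R * P * Dᵀ)).trace, ?_⟩
    intro t
    have e : 8 * ((F * Θ * δ * sqrtP)ᵀ * (F * Θ * δ * sqrtP)).trace =
      2 * (Sigᵀ * (D * P * Dᵀ)).trace := by rw [hq]; ring
    rw [e, hf, hf, hAt]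
    simp only [Matrix.transpose_add, Matrix.transpose_smul, Matrix.add_mul, Matrix.mul_add,
      Matrix.smul_mul, Matrix.mul_smul, Matrix.trace_add, Matrix.trace_smul, smul_eq_mul,
      smul_add]
    ring
  have hnn : ∀ δ : Matrix (Fin n) (Fin n) ℝ,
      0 ≤ ((F * Θ * δ * sqrtP)ᵀ * (F * Θ * δ * sqrtP)).trace := by
    intro δ
    have h := (Matrix.posSemidef_conjTranspose_mul_self (F * Θ * δ * sqrtP)).trace_nonneg
    rwa [Matrix.conjTranspose_eq_transpose_of_trivial] at h
  refine ⟨?_, ?_, ?_⟩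
  · intro R δ _ _
    refine ⟨?_, mul_nonneg (by norm_num) (hnn δ)⟩
    obtain ⟨l, hl⟩ := key R δ
    generalize ((F * Θ * δ * sqrtP)ᵀ * (F * Θ * δ * sqrtP)).trace = q at hl ⊢
    have hd : (deriv fun t : ℝ => f (R + t • δ)) = fun t => l + t * (16 * q) := by
      funext t
      simp only [hl]
      have h := (((hasDerivAt_id t).mul_const l).const_add (f R)).add
        (((hasDerivAt_id t).pow 2).mul_const (8 * q))
      refine (h.congr_deriv ?_).deriv
      simp
      ring
    rw [hd]
    simpa using ((hasDerivAt_id (0 : ℝ)).mul_const (16 * q)).const_add l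
  · intro x hx y hy a b _ _ _
    simp only [Set.mem_setOf_eq] at hx hy ⊢
    simp [hx, hy]
  · intro x _ y _ a b ha hb hab
    obtain ⟨l, hl⟩ := key x (y - x)
    have hq := hnn (y - x)
    generalize ((F * Θ * (y - x) * sqrtP)ᵀ * (F * Θ * (y - x) * sqrtP)).trace = q at hl hq
    have h1 := hl 1
    have hb' := hl b
    have e1 : x + (1 : ℝ) • (y - x) = y := by simp
    have ha' : a = 1 - b := by linarith
    have e2 : x + b • (y - x) = a • x + b • y := by
      rw [ha', smul_sub, sub_smul, one_smul]; abel
    rw [e1] at h1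
    rw [e2] at hb'
    rw [hb', h1, smul_eq_mul, smul_eq_mul, ha']
    have : 0 ≤ a * b * q := mul_nonneg (mul_nonneg ha hb) hq
    rw [ha'] at this
    nlinarith
end

section
/- Let Θ ∈ ℝ^{n×n} and J ∈ ℝ^{m×m} be real antisymmetric, M ∈ ℝ^{m×n}, B := 2ΘMᵀ, let P ∈ ℝ^{n×n} be real symmetric positive semidefinite, F ∈ ℝ^{s×n}, Σ := FᵀF, and for symmetric R set A(R) := 2Θ(R + MᵀJM) and f(R) := ⟨Σ, A(R)BBᵀ + BBᵀA(R)ᵀ + 2A(R)PA(R)ᵀ⟩. Let 𝒰 be a linear subspace of the space of real symmetric n×n matrices and R₀ a fixed symmetric matrix. Then R ∈ R₀ + 𝒰 is a global minimizer of f over the affine subspace R₀ + 𝒰 if and only if ⟨S(ΘΣ(BBᵀ + 2A(R)P)), δ⟩ = 0 for all δ ∈ 𝒰, where S(X) := (X + Xᵀ)/2. -/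
open Matrix

theorem aux_sgrad {n : ℕ} (Θ Sig C P A δ : Matrix (Fin n) (Fin n) ℝ) (hΘ : Θᵀ = -Θ)
    (hS : Sigᵀ = Sig) (hC : Cᵀ = C) (hP : Pᵀ = P) (hδ : δᵀ = δ) :
    (((1 / 2 : ℝ) • (Θ * Sig * (C + (2 : ℝ) • (A * P)) +
        (Θ * Sig * (C + (2 : ℝ) • (A * P)))ᵀ))ᵀ * δ).trace
      = -((C * Sig * (Θ * δ)).trace + 2 * (P * Aᵀ * Sig * (Θ * δ)).trace) := by
  have h1 : ((Θ * Sig * (C + (2 : ℝ) • (A * P))) * δ).trace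
      = ((Θ * Sig * (C + (2 : ℝ) • (A * P)))ᵀ * δ).trace := by
    rw [← trace_transpose, transpose_mul, hδ, trace_mul_comm]
  have h2 : ((Θ * Sig * (C + (2 : ℝ) • (A * P)))ᵀ * δ).trace
      = -((C * Sig * (Θ * δ)).trace + 2 * (P * Aᵀ * Sig * (Θ * δ)).trace) := by
    simp only [transpose_mul, transpose_add, transpose_smul, hΘ, hS, hC, hP, Matrix.mul_neg,
      Matrix.neg_mul, Matrix.add_mul, Matrix.smul_mul, trace_neg, trace_add, trace_smul,
      smul_eq_mul, Matrix.mul_assoc]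
  rw [transpose_smul, transpose_add, transpose_transpose, Matrix.smul_mul, Matrix.add_mul,
    trace_smul, trace_add, h1, h2, smul_eq_mul]
  ring

theorem aux_expand {n : ℕ} (Sig C P A W : Matrix (Fin n) (Fin n) ℝ)
    (hS : Sigᵀ = Sig) (hC : Cᵀ = C) (hP : Pᵀ = P) :
    (Sig * ((A + (2 : ℝ) • W) * C + C * (A + (2 : ℝ) • W)ᵀ +
        (2 : ℝ) • ((A + (2 : ℝ) • W) * P * (A + (2 : ℝ) • W)ᵀ))).trace
      = (Sig * (A * C + C * Aᵀ + (2 : ℝ) • (A * P * Aᵀ))).trace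
        + 4 * ((C * Sig * W).trace + 2 * (P * Aᵀ * Sig * W).trace)
        + 8 * (Sig * (W * (P * Wᵀ))).trace := by
  have h1 : (Sig * (W * C)).trace = (C * (Sig * W)).trace := by
    rw [← Matrix.mul_assoc, trace_mul_comm]
  have h2 : (Sig * (C * Wᵀ)).trace = (C * (Sig * W)).trace := by
    rw [← trace_transpose]
    simp only [transpose_mul, transpose_transpose, hS, hC]
    rw [trace_mul_comm, ← Matrix.mul_assoc, trace_mul_comm]
  have h3 : (Sig * (W * (P * Aᵀ))).trace = (P * (Aᵀ * (Sig * W))).trace := by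
    rw [← Matrix.mul_assoc, trace_mul_comm, Matrix.mul_assoc]
  have h4 : (Sig * (A * (P * Wᵀ))).trace = (P * (Aᵀ * (Sig * W))).trace := by
    rw [← h3, ← trace_transpose]
    simp only [transpose_mul, transpose_transpose, hS, hP]
    rw [trace_mul_comm]
    simp only [Matrix.mul_assoc]
  simp only [transpose_add, transpose_smul, Matrix.add_mul, Matrix.mul_add, Matrix.smul_mul,
    Matrix.mul_smul, trace_add, trace_smul, smul_eq_mul, Matrix.mul_assoc, h1, h2, h3, h4,
    smul_add]
  ring

/-- First-order optimality condition: `R ∈ R₀ + 𝒰` is a global minimizer of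
`f(R) = ⟨Σ, A(R)BBᵀ + BBᵀA(R)ᵀ + 2A(R)PA(R)ᵀ⟩` over the affine subspace `R₀ + 𝒰`
iff `⟨S(ΘΣ(BBᵀ + 2A(R)P)), δ⟩ = 0` for all `δ ∈ 𝒰`. -/
theorem stmt_16 (n m s : ℕ)
    (Θ : Matrix (Fin n) (Fin n) ℝ) (hΘ : Θᵀ = -Θ)
    (J : Matrix (Fin m) (Fin m) ℝ) (hJ : Jᵀ = -J)
    (M : Matrix (Fin m) (Fin n) ℝ)
    (B : Matrix (Fin n) (Fin m) ℝ) (hB : B = (2 : ℝ) • (Θ * Mᵀ))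
    (P : Matrix (Fin n) (Fin n) ℝ) (hP : P.PosSemidef)
    (F : Matrix (Fin s) (Fin n) ℝ)
    (Sig : Matrix (Fin n) (Fin n) ℝ) (hSig : Sig = Fᵀ * F)
    (A : Matrix (Fin n) (Fin n) ℝ → Matrix (Fin n) (Fin n) ℝ)
    (hA : ∀ R, A R = (2 : ℝ) • (Θ * (R + Mᵀ * J * M)))
    (f : Matrix (Fin n) (Fin n) ℝ → ℝ)
    (hf : ∀ R, f R = (Sigᵀ *
      (A R * B * Bᵀ + B * Bᵀ * (A R)ᵀ + (2 : ℝ) • (A R * P * (A R)ᵀ))).trace)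
    (Sgrad : Matrix (Fin n) (Fin n) ℝ → Matrix (Fin n) (Fin n) ℝ)
    (hSgrad : ∀ R, Sgrad R = (1 / 2 : ℝ) •
      (Θ * Sig * (B * Bᵀ + (2 : ℝ) • (A R * P)) +
        (Θ * Sig * (B * Bᵀ + (2 : ℝ) • (A R * P)))ᵀ))
    (U : Submodule ℝ (Matrix (Fin n) (Fin n) ℝ)) (hU : ∀ X ∈ U, Xᵀ = X)
    (R₀ : Matrix (Fin n) (Fin n) ℝ) (hR₀ : R₀ᵀ = R₀) :
    ∀ R : Matrix (Fin n) (Fin n) ℝ, R - R₀ ∈ U →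
      ((∀ R' : Matrix (Fin n) (Fin n) ℝ, R' - R₀ ∈ U → f R ≤ f R') ↔
        ∀ δ ∈ U, ((Sgrad R)ᵀ * δ).trace = 0) := by
  have hSs : Sigᵀ = Sig := by rw [hSig, transpose_mul, transpose_transpose]
  have hPs : Pᵀ = P := by
    have := hP.isHermitian.eq
    rwa [conjTranspose_eq_transpose_of_trivial] at this
  have hC : (B * Bᵀ)ᵀ = B * Bᵀ := by rw [transpose_mul, transpose_transpose]
  have key : ∀ R δ, δ ∈ U → f (R + δ) = f R - 4 * ((Sgrad R)ᵀ * δ).trace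
      + 8 * (Sig * ((Θ * δ) * (P * (Θ * δ)ᵀ))).trace := by
    intro R δ hδ
    have hAA : A (R + δ) = A R + (2 : ℝ) • (Θ * δ) := by
      rw [hA, hA, ← smul_add, ← Matrix.mul_add]
      congr 2
      abel
    rw [hf, hf, hSgrad, hAA, aux_sgrad Θ Sig (B * Bᵀ) P (A R) δ hΘ hSs hC hPs (hU δ hδ), hSs,
      Matrix.mul_assoc _ B, Matrix.mul_assoc _ B, aux_expand Sig (B * Bᵀ) P (A R) (Θ * δ) hSs hC hPs]
    ring
  have hq : ∀ W : Matrix (Fin n) (Fin n) ℝ, 0 ≤ (Sig * (W * (P * Wᵀ))).trace := by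
    intro W
    have h := (hP.mul_mul_conjTranspose_same (F * W)).trace_nonneg
    rw [conjTranspose_eq_transpose_of_trivial, transpose_mul] at h
    rw [hSig, Matrix.mul_assoc, trace_mul_comm]
    simpa only [Matrix.mul_assoc] using h
  intro R hR
  constructor
  · intro hmin δ hδ
    have ht : ∀ t : ℝ, 0 ≤ -4 * t * ((Sgrad R)ᵀ * δ).trace
        + 8 * (t * t) * (Sig * ((Θ * δ) * (P * (Θ * δ)ᵀ))).trace := by
      intro t
      have h1 := hmin (R + t • δ) (by
        rw [add_sub_right_comm]
        exact U.add_mem hR (U.smul_mem t hδ))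
      rw [key R (t • δ) (U.smul_mem t hδ)] at h1
      simp only [Matrix.mul_smul, Matrix.smul_mul, transpose_smul, trace_smul, smul_eq_mul] at h1
      linarith
    have hq0 := hq (Θ * δ)
    generalize (Sig * ((Θ * δ) * (P * (Θ * δ)ᵀ))).trace = q at ht hq0
    generalize ((Sgrad R)ᵀ * δ).trace = g at ht
    have h2 := ht (g / (4 * (q + 1)))
    have hpos : 0 < q + 1 := by linarith
    have h3 : -4 * (g / (4 * (q + 1))) * g
        + 8 * (g / (4 * (q + 1)) * (g / (4 * (q + 1)))) * q
        = -(g ^ 2 * (q + 2) / (2 * (q + 1) ^ 2)) := by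
      field_simp
      ring
    rw [h3] at h2
    by_contra hg
    have : 0 < g ^ 2 * (q + 2) / (2 * (q + 1) ^ 2) := by positivity
    linarith
  · intro h R' hR'
    have hd : R' - R ∈ U := by
      have := U.sub_mem hR' hR
      rwa [sub_sub_sub_cancel_right] at this
    have h1 := key R (R' - R) hd
    rw [h _ hd, add_sub_cancel] at h1
    have := hq (Θ * (R' - R))
    linarith
end

section
/- Let n₁, n₂ be positive integers, let Θ₁ ∈ ℝ^{n₁×n₁} and Θ₂ ∈ ℝ^{n₂×n₂} be real antisymmetric, and let Σ, P ∈ ℝ^{(n₁+n₂)×(n₁+n₂)} be real symmetric positive semidefinite, written in block form Σ = [[Σ₁₁, Σ₁₂],[Σ₁₂ᵀ, Σ₂₂]] and P = [[P₁₁, P₁₂],[P₁₂ᵀ, P₂₂]] with Σ₁₁, P₁₁ ∈ ℝ^{n₁×n₁}. Define the linear operator g on ℝ^{n₁×n₂} by g(N) := Θ₁Σ₁₁Θ₁ N P₂₂ + P₁₁ N Θ₂Σ₂₂Θ₂ + Θ₁Σ₁₂Θ₂ Nᵀ P₁₂ + P₁₂ Nᵀ Θ₁Σ₁₂Θ₂.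 Then g is self-adjoint with respect to the Frobenius inner product, i.e., ⟨g(N), N'⟩ = ⟨N, g(N')⟩ for all N, N' ∈ ℝ^{n₁×n₂}, and g is negative semidefinite, i.e., ⟨N, g(N)⟩ ≤ 0 for all N ∈ ℝ^{n₁×n₂}. -/
open Matrix

lemma trace_mul_nonneg_aux {m : Type*} [Fintype m] [DecidableEq m] (Q P : Matrix m m ℝ)
    (hQ : Q.PosSemidef) (hP : P.PosSemidef) : 0 ≤ (Q * P).trace := by
  obtain ⟨B, rfl⟩ : ∃ B : Matrix m m ℝ, P = Bᴴ * B := by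
    open scoped MatrixOrder in
    exact CStarAlgebra.nonneg_iff_eq_star_mul_self.mp hP.nonneg
  have h := (hQ.mul_mul_conjTranspose_same B).trace_nonneg
  rwa [Matrix.mul_assoc, Matrix.trace_mul_comm, Matrix.mul_assoc] at h

lemma trace_blocks_aux {m n : Type*} [Fintype m] [Fintype n] (A : Matrix m m ℝ)
    (B : Matrix m n ℝ) (C : Matrix n m ℝ) (D : Matrix n n ℝ) :
    (Matrix.fromBlocks A B C D).trace = A.trace + D.trace := by
  simp [Matrix.trace, Fintype.sum_sum_type]

/-- The linear operator `g` built from the blocks of the psd matrices `Σ`, `P` and the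
antisymmetric matrices `Θ₁`, `Θ₂` is self-adjoint and negative semidefinite with respect
to the Frobenius inner product. -/
theorem stmt_17 (n₁ n₂ : ℕ) (hn₁ : 0 < n₁) (hn₂ : 0 < n₂)
    (Θ₁ : Matrix (Fin n₁) (Fin n₁) ℝ) (hΘ₁ : Θ₁ᵀ = -Θ₁)
    (Θ₂ : Matrix (Fin n₂) (Fin n₂) ℝ) (hΘ₂ : Θ₂ᵀ = -Θ₂)
    (S11 P11 : Matrix (Fin n₁) (Fin n₁) ℝ)
    (S22 P22 : Matrix (Fin n₂) (Fin n₂) ℝ)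
    (S12 P12 : Matrix (Fin n₁) (Fin n₂) ℝ)
    (hS : (Matrix.fromBlocks S11 S12 S12ᵀ S22).PosSemidef)
    (hP : (Matrix.fromBlocks P11 P12 P12ᵀ P22).PosSemidef)
    (g : Matrix (Fin n₁) (Fin n₂) ℝ → Matrix (Fin n₁) (Fin n₂) ℝ)
    (hg : ∀ N, g N = Θ₁ * S11 * Θ₁ * N * P22 + P11 * N * (Θ₂ * S22 * Θ₂) +
      Θ₁ * S12 * Θ₂ * Nᵀ * P12 + P12 * Nᵀ * (Θ₁ * S12 * Θ₂)) :
    (∀ N N' : Matrix (Fin n₁) (Fin n₂) ℝ,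
        ((g N)ᵀ * N').trace = (Nᵀ * g N').trace) ∧
      (∀ N : Matrix (Fin n₁) (Fin n₂) ℝ, (Nᵀ * g N).trace ≤ 0) := by
  obtain ⟨hS11, -, -, hS22⟩ := Matrix.isHermitian_fromBlocks_iff.mp hS.1
  obtain ⟨hP11, -, -, hP22⟩ := Matrix.isHermitian_fromBlocks_iff.mp hP.1
  replace hS11 : S11ᵀ = S11 := by simpa [Matrix.IsHermitian] using hS11
  replace hS22 : S22ᵀ = S22 := by simpa [Matrix.IsHermitian] using hS22
  replace hP11 : P11ᵀ = P11 := by simpa [Matrix.IsHermitian] using hP11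
  replace hP22 : P22ᵀ = P22 := by simpa [Matrix.IsHermitian] using hP22
  have key := fun (N : Matrix (Fin n₁) (Fin n₂) ℝ) => trace_mul_nonneg_aux _ _
    (hS.conjTranspose_mul_mul_same
      (Matrix.fromBlocks Θ₁ 0 0 Θ₂ * Matrix.fromBlocks 0 N Nᵀ 0)) hP
  have hA : (Θ₁ * S11 * Θ₁)ᵀ = Θ₁ * S11 * Θ₁ := by
    simp [Matrix.transpose_mul, hΘ₁, hS11, Matrix.mul_assoc]
  have hB : (Θ₂ * S22 * Θ₂)ᵀ = Θ₂ * S22 * Θ₂ := by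
    simp [Matrix.transpose_mul, hΘ₂, hS22, Matrix.mul_assoc]
  have hC : (Θ₁ * S12 * Θ₂)ᵀ = Θ₂ * S12ᵀ * Θ₁ := by
    simp [Matrix.transpose_mul, hΘ₂, hΘ₁, Matrix.mul_assoc]
  have hZ : ∀ N : Matrix (Fin n₁) (Fin n₂) ℝ,
      (Matrix.fromBlocks Θ₁ 0 0 Θ₂ * Matrix.fromBlocks 0 N Nᵀ 0)ᴴ *
        Matrix.fromBlocks S11 S12 S12ᵀ S22 *
        (Matrix.fromBlocks Θ₁ 0 0 Θ₂ * Matrix.fromBlocks 0 N Nᵀ 0) =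
      - Matrix.fromBlocks (N * (Θ₂ * S22 * Θ₂) * Nᵀ) (N * (Θ₁ * S12 * Θ₂)ᵀ * N)
        (Nᵀ * (Θ₁ * S12 * Θ₂) * Nᵀ) (Nᵀ * (Θ₁ * S11 * Θ₁) * N) := by
    intro N
    rw [hC]
    simp [Matrix.fromBlocks_multiply, Matrix.fromBlocks_transpose, Matrix.transpose_mul,
      hΘ₁, hΘ₂, Matrix.mul_assoc, Matrix.fromBlocks_neg]
  simp only [hZ] at key
  clear hZ hC
  generalize Θ₁ * S11 * Θ₁ = A at *
  generalize Θ₂ * S22 * Θ₂ = B at *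
  generalize Θ₁ * S12 * Θ₂ = C at *
  constructor
  · intro N N'
    have e1 : ((A * N * P22)ᵀ * N').trace = (Nᵀ * (A * N' * P22)).trace := by
      rw [Matrix.transpose_mul, Matrix.transpose_mul, hA, hP22, Matrix.mul_assoc,
        Matrix.trace_mul_comm]
      simp only [Matrix.mul_assoc]
    have e2 : ((P11 * N * B)ᵀ * N').trace = (Nᵀ * (P11 * N' * B)).trace := by
      rw [Matrix.transpose_mul, Matrix.transpose_mul, hB, hP11, Matrix.mul_assoc,
        Matrix.trace_mul_comm]
      simp only [Matrix.mul_assoc]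
    have e3 : ∀ X Y : Matrix (Fin n₁) (Fin n₂) ℝ,
        ((X * Nᵀ * Y)ᵀ * N').trace = (Nᵀ * (Y * N'ᵀ * X)).trace := by
      intro X Y
      rw [← Matrix.trace_transpose, Matrix.transpose_mul, Matrix.transpose_transpose,
        ← Matrix.mul_assoc, ← Matrix.mul_assoc, Matrix.mul_assoc, Matrix.trace_mul_comm]
      simp only [Matrix.mul_assoc]
    rw [hg, hg]
    simp only [Matrix.transpose_add, Matrix.add_mul, Matrix.mul_add, Matrix.trace_add, e1, e2, e3]
    ring
  · intro N
    have h := key N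
    rw [Matrix.neg_mul, Matrix.trace_neg, Matrix.fromBlocks_multiply,
      trace_blocks_aux, Matrix.trace_add, Matrix.trace_add] at h
    have e1 : (N * B * Nᵀ * P11).trace = (Nᵀ * (P11 * N * B)).trace := by
      rw [Matrix.mul_assoc, Matrix.trace_mul_comm]
      simp only [Matrix.mul_assoc]
    have e2 : (N * Cᵀ * N * P12ᵀ).trace = (Nᵀ * (P12 * Nᵀ * C)).trace := by
      rw [← Matrix.trace_transpose]
      simp only [Matrix.transpose_mul, Matrix.transpose_transpose]
      rw [← Matrix.mul_assoc, Matrix.trace_mul_comm]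
      simp only [Matrix.mul_assoc]
      rw [Matrix.trace_mul_comm]
      simp only [Matrix.mul_assoc]
    rw [hg]
    simp only [Matrix.mul_add, Matrix.trace_add]
    rw [e1, e2] at h
    simp only [Matrix.mul_assoc] at h ⊢
    linarith
end
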